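/- Let n ≥ 2 and let K_1, …, K_{n-2} be nonempty compact convex subsets of ℝ^n. Then there exist orthonormal vectors v_1, v_2 ∈ ℝ^n such that w_{K_i}(v_1) = w_{K_i}(v_2) for every i = 1, …, n-2. (Equivalently, there is an orthogonal decomposition ℝ^n = ℝ^2 ⊕ ℝ^{n-2} such that each region is inscribed in S × ℝ^{n-2} where S is a square.) -/

import Mathlib

open scoped RealInnerProductSpace

/-- The width of a set `K ⊆ ℝⁿ` in direction `v`:
`w_K(v) = sup_{x ∈ K} ⟪x, v⟫ − inf_{x ∈ K} ⟪x, v⟫`. -/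
noncomputable def dirWidth {n : ℕ} (K : Set (EuclideanSpace ℝ (Fin n)))
    (v : EuclideanSpace ℝ (Fin n)) : ℝ :=
  sSup ((fun x => ⟪x, v⟫) '' K) - sInf ((fun x => ⟪x, v⟫) '' K)

/-!
Fix a unit vector `e`. For a unit vector `b ⟂ e` the vectors `(e + b) / √2` and `(e - b) / √2` are
orthonormal, and `b ↦ -b` exchanges them. The differences of the `n - 2` widths in these two
directions are continuous odd functions of `b` on an `(n - 2)`-dimensional sphere, so by the
Borsuk–Ulam theorem they have a common zero.

Borsuk–Ulam for `m` odd functions is proved on the `ℓ¹` sphere of `ℝᵈ`, `m < d`, with mod 2 chains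
of arbitrarily small simplices. Starting from a vertex `c₀`, contracting the closed hemispheres to
their poles yields chains `cₖ` on the `k`-sphere with `∂cₖ₊₁ = cₖ + (-cₖ)`. Label the points by the
signs `uᵢ` of the functions, with `uᵢ(-x) = uᵢ(x) + 1` mod 2. By Stokes, the cup product of the
coboundaries `δuᵢ` takes on `cₖ₊₁` the same value as that of one factor less on `cₖ`, hence the
value `1` on `cₘ`. So some simplex of `cₘ` sees a sign change of every function, and compactness
produces a common zero.
-/

/-- Augmented mod 2 chains on a set of vertices: formal sums of finite sequences of points, where a
sequence `[x₀, …, xₖ]`, possibly with repetitions, stands for an ordered `k`-simplex and `[]` for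
the generator in degree `-1`. -/
abbrev TupleChain (E : Type*) := List E →₀ ZMod 2

namespace TupleChain

open Finsupp

variable {E F : Type*}

section Boundary

/-- The chain consisting of a single simplex. -/
noncomputable def simplex (l : List E) : TupleChain E := single l 1

theorem hom_ext {M : Type*} [AddCommMonoid M] [Module (ZMod 2) M] {A B : TupleChain E →ₗ[ZMod 2] M}
    (h : ∀ l, A (simplex l) = B (simplex l)) : A = B :=
  Finsupp.lhom_ext' fun l => LinearMap.ext_ring (h l)

/-- The cone with apex `x`, which prepends the vertex `x` to each simplex. -/
noncomputable def cone (x : E) : TupleChain E →ₗ[ZMod 2] TupleChain E :=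
  lmapDomain _ _ (List.cons x)

/-- The chain map induced by a map of vertices. -/
noncomputable def map (f : E → F) : TupleChain E →ₗ[ZMod 2] TupleChain F :=
  lmapDomain _ _ (List.map f)

/-- The boundary of the augmented complex, by recursion along `∂ (x * l) = l + x * ∂ l`;
no signs occur mod 2. -/
noncomputable def boundary : TupleChain E →ₗ[ZMod 2] TupleChain E :=
  linearCombination _ boundarySimplex
where
  boundarySimplex : List E → TupleChain E
    | [] => 0
    | x :: l => simplex l + cone x (boundarySimplex l)

@[simp]
theorem cone_simplex (x : E) (l : List E) : cone x (simplex l) = simplex (x :: l) :=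
  mapDomain_single

@[simp]
theorem map_simplex (f : E → F) (l : List E) : map f (simplex l) = simplex (l.map f) :=
  mapDomain_single

@[simp]
theorem boundary_nil : boundary (simplex ([] : List E)) = 0 := by
  simp [boundary, boundary.boundarySimplex, simplex]

theorem boundary_cons (x : E) (l : List E) :
    boundary (simplex (x :: l)) = simplex l + cone x (boundary (simplex l)) := by
  simp [boundary, boundary.boundarySimplex, simplex]

theorem boundary_cone (x : E) (c : TupleChain E) :
    boundary (cone x c) = c + cone x (boundary c) := by
  have : boundary ∘ₗ cone x = LinearMap.id + cone x ∘ₗ boundary :=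
    hom_ext fun l => by simp [boundary_cons]
  exact LinearMap.congr_fun this c

theorem boundary_boundary (c : TupleChain E) : boundary (boundary c) = 0 := by
  have : (boundary ∘ₗ boundary : TupleChain E →ₗ[ZMod 2] TupleChain E) = 0 := by
    refine hom_ext fun l => ?_
    simp only [LinearMap.comp_apply, LinearMap.zero_apply]
    induction l with
    | nil => simp
    | cons x l ih =>
      rw [boundary_cons, map_add, boundary_cone, ih, map_zero, add_zero, ZModModule.add_self]
  exact LinearMap.congr_fun this c

theorem map_cone (f : E → F) (x : E) (c : TupleChain E) :
    map f (cone x c) = cone (f x) (map f c) := by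
  have : map f ∘ₗ cone x = cone (f x) ∘ₗ map f := hom_ext fun l => by simp
  exact LinearMap.congr_fun this c

theorem boundary_map (f : E → F) (c : TupleChain E) : boundary (map f c) = map f (boundary c) := by
  have : boundary ∘ₗ map f = map f ∘ₗ boundary := by
    refine hom_ext fun l => ?_
    simp only [LinearMap.comp_apply, map_simplex]
    induction l with
    | nil => simp
    | cons x l ih =>
      rw [List.map_cons, boundary_cons, boundary_cons, ih, map_add, map_cone, map_simplex]
  exact LinearMap.congr_fun this c

theorem map_id (c : TupleChain E) : map id c = c := by
  simp [map]

theorem map_map_of_involutive {f : E → E} (hf : Function.Involutive f) (c : TupleChain E) :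
    map f (map f c) = c := by
  have : map f ∘ₗ map f = LinearMap.id := hom_ext fun l => by simp [hf.comp_self]
  exact LinearMap.congr_fun this c

end Boundary

section Prism

/-- The prism operator between two vertex maps `f` and `g`, sending `[x₀, …, xₖ]` to
`∑ i, [f x₀, …, f xᵢ, g xᵢ, …, g xₖ]`. -/
noncomputable def prism (f g : E → F) : TupleChain E →ₗ[ZMod 2] TupleChain F :=
  linearCombination _ prismSimplex
where
  prismSimplex : List E → TupleChain F
    | [] => 0
    | x :: l => simplex (f x :: g x :: l.map g) + cone (f x) (prismSimplex l)

variable (f g : E → F)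

@[simp]
theorem prism_nil : prism f g (simplex []) = 0 := by
  simp [prism, prism.prismSimplex, simplex]

theorem prism_cons (x : E) (l : List E) :
    prism f g (simplex (x :: l)) =
      simplex (f x :: g x :: l.map g) + cone (f x) (prism f g (simplex l)) := by
  simp [prism, prism.prismSimplex, simplex]

theorem prism_cone (x : E) (c : TupleChain E) :
    prism f g (cone x c) =
      cone (f x) (cone (g x) (map g c)) + cone (f x) (prism f g c) := by
  have : prism f g ∘ₗ cone x =
      cone (f x) ∘ₗ cone (g x) ∘ₗ map g + cone (f x) ∘ₗ prism f g :=
    hom_ext fun l => by simp [prism_cons]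
  exact LinearMap.congr_fun this c

theorem boundary_prism (c : TupleChain E) :
    boundary (prism f g c) = map f c + map g c + prism f g (boundary c) := by
  have : boundary ∘ₗ prism f g = map f + map g + prism f g ∘ₗ boundary := by
    refine hom_ext fun l => ?_
    simp only [LinearMap.comp_apply, LinearMap.add_apply]
    induction l with
    | nil => simp [ZModModule.add_self]
    | cons x l ih =>
      rw [prism_cons, map_add, boundary_cons, boundary_cons, boundary_cone, ih, boundary_cons x l,
        map_add (prism f g), prism_cone]
      simp only [map_add, map_simplex, cone_simplex, List.map_cons, ← boundary_map]
      linear_combination (norm := abel) ZModModule.add_self (simplex (f x :: l.map g))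
  exact LinearMap.congr_fun this c

end Prism

section Support

/-- The chains all of whose simplices belong to `P`. -/
noncomputable abbrev chainsOn (P : Set (List E)) : Submodule (ZMod 2) (TupleChain E) :=
  supported (ZMod 2) (ZMod 2) P

variable {P : Set (List E)} {M : Type*} [AddCommGroup M] [Module (ZMod 2) M]

theorem simplex_mem_chainsOn {l : List E} (hl : l ∈ P) : simplex l ∈ chainsOn P :=
  single_mem_supported _ _ hl

theorem apply_mem_of_mem_chainsOn {A : TupleChain E →ₗ[ZMod 2] M} {Q : Submodule (ZMod 2) M}
    (h : ∀ l ∈ P, A (simplex l) ∈ Q) {c : TupleChain E} (hc : c ∈ chainsOn P) : A c ∈ Q := by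
  rw [chainsOn, supported_eq_span_single] at hc
  exact (Submodule.span_le (p := Q.comap A)).2 (Set.image_subset_iff.2 h) hc

theorem apply_eq_of_mem_chainsOn {A B : TupleChain E →ₗ[ZMod 2] M}
    (h : ∀ l ∈ P, A (simplex l) = B (simplex l)) {c : TupleChain E} (hc : c ∈ chainsOn P) :
    A c = B c :=
  apply_mem_of_mem_chainsOn (Q := LinearMap.eqLocus A B) (A := LinearMap.id) h hc

theorem prism_simplex_mem_chainsOn (f g : E → F) (l : List E) :
    prism f g (simplex l) ∈ chainsOn {l' | ∀ y ∈ l', ∃ x ∈ l, y = f x ∨ y = g x} := by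
  induction l with
  | nil => simp
  | cons a l ih =>
    rw [prism_cons]
    refine add_mem (simplex_mem_chainsOn ?_) (apply_mem_of_mem_chainsOn (fun l' hl' => ?_) ih)
    · simp only [Set.mem_ofPred_eq, List.mem_cons, List.mem_map]
      grind
    · rw [cone_simplex]
      refine simplex_mem_chainsOn ?_
      simp only [Set.mem_ofPred_eq, List.mem_cons] at hl' ⊢
      grind

end Support

section CupProduct

/-- The cup product of a `0`-cochain `u` with a cochain `ψ`, namely
`[x₀, …, xₖ] ↦ u x₀ * ψ [x₀, …, xₖ]`. -/
noncomputable def cup (u : E → ZMod 2) (ψ : TupleChain E →ₗ[ZMod 2] ZMod 2) :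
    TupleChain E →ₗ[ZMod 2] ZMod 2 :=
  linearCombination _ fun l => l.head?.elim 0 u * ψ (simplex l)

/-- The iterated cup product `δu₁ ∪ … ∪ δuₖ` of coboundaries of `0`-cochains, presented as the
coboundary of `u₁ ∪ δu₂ ∪ … ∪ δuₖ`. For `k = 0` it is the coboundary of the cochain of degree `-1`
reading off the coefficient of `[]`, which takes the value `1` on each vertex. -/
noncomputable def coboundaryCup : List (E → ZMod 2) → TupleChain E →ₗ[ZMod 2] ZMod 2
  | [] => lapply [] ∘ₗ boundary
  | u :: us => cup u (coboundaryCup us) ∘ₗ boundary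

theorem cup_nil (u : E → ZMod 2) (ψ : TupleChain E →ₗ[ZMod 2] ZMod 2) :
    cup u ψ (simplex []) = 0 := by
  simp [cup, simplex]

theorem cup_cons (u : E → ZMod 2) (ψ : TupleChain E →ₗ[ZMod 2] ZMod 2) (x : E) (l : List E) :
    cup u ψ (simplex (x :: l)) = u x * ψ (simplex (x :: l)) := by
  simp [cup, simplex]

theorem cup_cone (u : E → ZMod 2) (ψ : TupleChain E →ₗ[ZMod 2] ZMod 2) (x : E)
    (c : TupleChain E) : cup u ψ (cone x c) = u x * ψ (cone x c) := by
  have : cup u ψ ∘ₗ cone x = u x • (ψ ∘ₗ cone x) := hom_ext fun l => by simp [cup_cons]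
  exact LinearMap.congr_fun this c

variable (u : E → ZMod 2) (us : List (E → ZMod 2))

theorem coboundaryCup_boundary (c : TupleChain E) : coboundaryCup us (boundary c) = 0 := by
  cases us <;> simp [coboundaryCup, boundary_boundary]

theorem coboundaryCup_simplex_nil : coboundaryCup us (simplex []) = 0 := by
  cases us <;> simp [coboundaryCup]

theorem coboundaryCup_nil_vertex (x : E) : coboundaryCup [] (simplex [x]) = 1 := by
  rw [coboundaryCup, LinearMap.comp_apply, boundary_cons, boundary_nil]
  simp [simplex]

theorem coboundaryCup_nil_cons_cons (x y : E) (l : List E) :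
    coboundaryCup [] (simplex (x :: y :: l)) = 0 := by
  have coeff_cone (c : TupleChain E) : cone x c [] = 0 :=
    mapDomain_of_notMem_range _ _ (by simp)
  rw [coboundaryCup, LinearMap.comp_apply, boundary_cons, lapply_apply, Finsupp.add_apply,
    coeff_cone]
  simp [simplex]

theorem coboundaryCup_cons_vertex (x : E) : coboundaryCup (u :: us) (simplex [x]) = 0 := by
  simp [coboundaryCup, boundary_cons, cup_nil]

theorem coboundaryCup_cons_cons_cons (x y : E) (l : List E) :
    coboundaryCup (u :: us) (simplex (x :: y :: l)) =
      (u x + u y) * coboundaryCup us (simplex (y :: l)) := by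
  have cocycle := coboundaryCup_boundary us (simplex (x :: y :: l))
  rw [boundary_cons, map_add] at cocycle
  rw [coboundaryCup, LinearMap.comp_apply, boundary_cons, map_add, cup_cons, cup_cone]
  linear_combination
    u x * cocycle - u x * ZModModule.add_self (coboundaryCup us (simplex (y :: l)))

theorem exists_ne_of_coboundaryCup_ne_zero {us : List (E → ZMod 2)} {l : List E}
    (h : coboundaryCup us (simplex l) ≠ 0) : ∀ u ∈ us, ∃ x ∈ l, ∃ y ∈ l, u x ≠ u y := by
  induction us generalizing l with
  | nil => simp
  | cons v us ih =>
    match l with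
    | [] => exact absurd (coboundaryCup_simplex_nil _) h
    | [x] => exact absurd (coboundaryCup_cons_vertex _ _ _) h
    | x :: y :: l =>
      rw [coboundaryCup_cons_cons_cons] at h
      rintro u (_ | ⟨_, hu⟩)
      · refine ⟨x, by simp, y, by simp, fun hxy => left_ne_zero_of_mul h ?_⟩
        rw [hxy, ZModModule.add_self]
      · obtain ⟨a, ha, b, hb, hab⟩ := ih (right_ne_zero_of_mul h) u hu
        exact ⟨a, List.mem_cons_of_mem _ ha, b, List.mem_cons_of_mem _ hb, hab⟩

variable {u us} {T : E → E}

theorem coboundaryCup_map_simplex {l : List E}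
    (hus : ∀ u ∈ us, ∀ x ∈ l, u (T x) = u x + 1) :
    coboundaryCup us (simplex (l.map T)) = coboundaryCup us (simplex l) := by
  induction us generalizing l with
  | nil =>
    match l with
    | [] => rfl
    | [x] => simp [coboundaryCup_nil_vertex]
    | x :: y :: l => simp [coboundaryCup_nil_cons_cons]
  | cons u us ih =>
    match l with
    | [] => rfl
    | [x] => simp [coboundaryCup_cons_vertex]
    | x :: y :: l =>
      have tail := ih (l := y :: l) fun v hv z hz =>
        hus v (List.mem_cons_of_mem _ hv) z (List.mem_cons_of_mem _ hz)
      simp only [List.map_cons] at tail ⊢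
      rw [coboundaryCup_cons_cons_cons, coboundaryCup_cons_cons_cons, tail,
        hus u (by simp) x (by simp), hus u (by simp) y (by simp), ← add_add_add_comm,
        ZModModule.add_self, add_zero]

-- The cup product with `u` turns the symmetrization of `c` back into `c`, because `u` separates
-- each point from its image under `T`.
theorem cup_coboundaryCup_add_map {P : Set (List E)}
    (hus : ∀ v ∈ u :: us, ∀ l ∈ P, ∀ x ∈ l, v (T x) = v x + 1)
    {c : TupleChain E} (hc : c ∈ chainsOn P) :
    cup u (coboundaryCup us) (c + map T c) = coboundaryCup us c := by
  suffices h : ∀ l ∈ P, (cup u (coboundaryCup us) + cup u (coboundaryCup us) ∘ₗ map T) (simplex l) =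
      coboundaryCup us (simplex l) by
    simpa using apply_eq_of_mem_chainsOn h hc
  intro l hl
  have equivariant := coboundaryCup_map_simplex (us := us) (T := T) (l := l)
    fun v hv => hus v (List.mem_cons_of_mem _ hv) l hl
  simp only [LinearMap.add_apply, LinearMap.comp_apply, map_simplex]
  match l with
  | [] => simp [cup_nil, coboundaryCup_simplex_nil]
  | x :: l =>
    simp only [List.map_cons] at equivariant ⊢
    rw [cup_cons, cup_cons, equivariant, hus u (by simp) _ hl x (by simp), ← add_mul,
      ← add_assoc, ZModModule.add_self, zero_add, one_mul]

end CupProduct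

section Vietoris

variable [PseudoMetricSpace E] [PseudoMetricSpace F] {S : Set E} {δ ε : ℝ}

/-- The simplices of the Vietoris complex of `S` at scale `ε`: sequences of points of `S` with
pairwise distances at most `ε`. -/
def vietorisSimplices (S : Set E) (ε : ℝ) : Set (List E) :=
  {l | ∀ x ∈ l, x ∈ S ∧ ∀ y ∈ l, dist x y ≤ ε}

/-- The chains of the Vietoris complex of `S` at scale `ε`. -/
noncomputable abbrev vietorisChains (S : Set E) (ε : ℝ) : Submodule (ZMod 2) (TupleChain E) :=
  chainsOn (vietorisSimplices S ε)

theorem vietorisChains_mono {S' : Set E} (h : S ⊆ S') :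
    vietorisChains S ε ≤ vietorisChains S' ε :=
  supported_mono fun _ hl x hx => ⟨h (hl x hx).1, (hl x hx).2⟩

theorem simplex_mem_vietorisChains_of_forall_eq {p : E} (hp : p ∈ S) (hε : 0 ≤ ε) {l : List E}
    (hl : ∀ x ∈ l, x = p) : simplex l ∈ vietorisChains S ε := by
  refine simplex_mem_chainsOn fun x hx => ⟨hl x hx ▸ hp, fun y hy => ?_⟩
  rwa [hl x hx, hl y hy, dist_self]

theorem map_mem_vietorisChains {S' : Set F} {f : E → F} (hf : Set.MapsTo f S S')
    (hiso : Isometry f) {c : TupleChain E} (hc : c ∈ vietorisChains S ε) :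
    map f c ∈ vietorisChains S' ε := by
  refine apply_mem_of_mem_chainsOn (fun l hl => ?_) hc
  rw [map_simplex]
  refine simplex_mem_chainsOn (List.forall_mem_map.2 fun x hx => ⟨hf (hl x hx).1, ?_⟩)
  exact List.forall_mem_map.2 fun y hy => (hiso.dist_eq x y).trans_le ((hl x hx).2 y hy)

theorem prism_mem_vietorisChains {S' : Set F} {f g : E → F} (hf : Set.MapsTo f S S')
    (hg : Set.MapsTo g S S')
    (hdist : ∀ x ∈ S, ∀ y ∈ S, dist x y ≤ δ →
      dist (f x) (f y) ≤ ε ∧ dist (f x) (g y) ≤ ε ∧ dist (g x) (g y) ≤ ε)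
    {c : TupleChain E} (hc : c ∈ vietorisChains S δ) : prism f g c ∈ vietorisChains S' ε := by
  refine apply_mem_of_mem_chainsOn (fun l hl => ?_) hc
  refine supported_mono (fun l' hl' y hy => ⟨?_, fun y' hy' => ?_⟩)
    (prism_simplex_mem_chainsOn f g l)
  · obtain ⟨x, hx, rfl | rfl⟩ := hl' y hy
    · exact hf (hl x hx).1
    · exact hg (hl x hx).1
  · obtain ⟨x, hx, hyx⟩ := hl' y hy
    obtain ⟨x', hx', hyx'⟩ := hl' y' hy'
    have forward := hdist x (hl x hx).1 x' (hl x' hx').1 ((hl x hx).2 x' hx')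
    have backward := hdist x' (hl x' hx').1 x (hl x hx).1 ((hl x' hx').2 x hx)
    rcases hyx with rfl | rfl <;> rcases hyx' with rfl | rfl
    · exact forward.1
    · exact forward.2.1
    · exact dist_comm (g x) (f x') ▸ backward.2.1
    · exact forward.2.2

end Vietoris

section Filling

theorem exists_boundary_eq_map_add_map {Q : Submodule (ZMod 2) (TupleChain F)} {z : TupleChain E}
    (hz : boundary z = 0) (h : ℕ → E → F) (N : ℕ)
    (hQ : ∀ k < N, prism (h k) (h (k + 1)) z ∈ Q) :
    ∃ c ∈ Q, boundary c = map (h 0) z + map (h N) z := by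
  induction N with
  | zero => exact ⟨0, zero_mem _, by rw [map_zero, ZModModule.add_self]⟩
  | succ N ih =>
    obtain ⟨c, hc, hbc⟩ := ih fun k hk => hQ k (hk.trans N.lt_succ_self)
    refine ⟨c + prism (h N) (h (N + 1)) z, add_mem hc (hQ N N.lt_succ_self), ?_⟩
    rw [map_add, hbc, boundary_prism, hz, map_zero, add_zero, ZModModule.add_add_add_cancel]

variable {E : Type*} [NormedAddCommGroup E] [NormedSpace ℝ E] {S : Set E} {p : E} {δ ε : ℝ}

theorem dist_lineMap_lineMap_le (p x y : E) {s : ℝ} (hs : |s| ≤ 1) (t : ℝ) :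
    dist (AffineMap.lineMap p x s) (AffineMap.lineMap p y t) ≤
      dist x y + dist s t * dist p y := by
  refine (dist_triangle _ (AffineMap.lineMap p y s) _).trans (add_le_add ?_ ?_)
  · rw [dist_eq_norm, AffineMap.lineMap_apply_module', AffineMap.lineMap_apply_module',
      add_sub_add_right_eq_sub, ← smul_sub, sub_sub_sub_cancel_right, norm_smul, dist_eq_norm]
    exact mul_le_of_le_one_left (norm_nonneg _) hs
  · rw [dist_lineMap_lineMap]

theorem prism_lineMap_mem_vietorisChains (hS : StarConvex ℝ p S) {R : ℝ}
    (hR : ∀ x ∈ S, dist p x ≤ R) {s t : ℝ} (hs : s ∈ Set.Icc 0 1) (ht : t ∈ Set.Icc 0 1)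
    (hst : dist s t * R ≤ ε - δ) {z : TupleChain E} (hz : z ∈ vietorisChains S δ) :
    prism (AffineMap.lineMap p · s) (AffineMap.lineMap p · t) z ∈ vietorisChains S ε := by
  have mapsTo {r : ℝ} (hr : r ∈ Set.Icc 0 1) : Set.MapsTo (AffineMap.lineMap p · r) S S :=
    fun x hx => hS.segment_subset hx
      (segment_eq_image_lineMap ℝ p x ▸ Set.mem_image_of_mem _ hr)
  have dist_le {r r' : ℝ} (hr : r ∈ Set.Icc 0 1) (hrr' : dist r r' ≤ dist s t) {x y : E}
      (hy : y ∈ S) (hxy : dist x y ≤ δ) :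
      dist (AffineMap.lineMap p x r) (AffineMap.lineMap p y r') ≤ ε := by
    have hr1 : |r| ≤ 1 := abs_le.2 ⟨by linarith [hr.1], hr.2⟩
    calc
      _ ≤ dist x y + dist r r' * dist p y := dist_lineMap_lineMap_le p x y hr1 r'
      _ ≤ δ + dist s t * R := by gcongr; exact hR y hy
      _ ≤ ε := by linarith
  exact prism_mem_vietorisChains (mapsTo hs) (mapsTo ht) (fun x _ y hy hxy =>
    ⟨dist_le hs (by simp) hy hxy, dist_le hs le_rfl hy hxy, dist_le ht (by simp) hy hxy⟩) hz

theorem exists_boundary_eq_map_const_add (hS : StarConvex ℝ p S) (hbdd : Bornology.IsBounded S)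
    (hδε : δ < ε) {z : TupleChain E} (hz : z ∈ vietorisChains S δ) (hbz : boundary z = 0) :
    ∃ c ∈ vietorisChains S ε, boundary c = map (fun _ => p) z + z := by
  obtain ⟨R, hR⟩ := hbdd.subset_closedBall p
  replace hR : ∀ x ∈ S, dist p x ≤ R := fun x hx => dist_comm p x ▸ hR hx
  obtain ⟨N, hN⟩ := exists_nat_gt (max 0 (R / (ε - δ)))
  have hN0 : (0 : ℝ) < N := (le_max_left _ _).trans_lt hN
  have hRN : R ≤ (ε - δ) * N :=
    (div_le_iff₀' (sub_pos.2 hδε)).1 ((le_max_right _ _).trans hN.le)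
  have time_mem (k : ℕ) (hk : k ≤ N) : (k / N : ℝ) ∈ Set.Icc (0 : ℝ) 1 :=
    ⟨by positivity, div_le_one_of_le₀ (Nat.cast_le.2 hk) hN0.le⟩
  have step_le (k : ℕ) : dist (k / N : ℝ) ((k + 1 : ℕ) / N) * R ≤ ε - δ := by
    rw [Real.dist_eq, ← sub_div, abs_div, abs_of_pos hN0, div_mul_eq_mul_div, div_le_iff₀ hN0]
    simpa using hRN
  obtain ⟨c, hc, hbc⟩ := exists_boundary_eq_map_add_map hbz
    (fun k x => AffineMap.lineMap p x (k / N : ℝ)) N fun k hk =>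
      prism_lineMap_mem_vietorisChains hS hR (time_mem k hk.le) (time_mem (k + 1) hk) (step_le k) hz
  refine ⟨c, hc, hbc.trans ?_⟩
  simp only [Nat.cast_zero, zero_div, div_self hN0.ne', AffineMap.lineMap_apply_zero,
    AffineMap.lineMap_apply_one]
  exact congrArg _ (map_id z)

theorem exists_boundary_eq_of_starConvex (hS : StarConvex ℝ p S) (hp : p ∈ S)
    (hbdd : Bornology.IsBounded S) (hε : 0 ≤ ε) (hδε : δ < ε) {z : TupleChain E}
    (hz : z ∈ vietorisChains S δ) (hbz : boundary z = 0) :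
    ∃ c ∈ vietorisChains S ε, boundary c = z := by
  obtain ⟨c, hc, hbc⟩ := exists_boundary_eq_map_const_add hS hbdd hδε hz hbz
  have cone_mem : cone p (map (fun _ => p) z) ∈ vietorisChains S ε := by
    refine apply_mem_of_mem_chainsOn (A := cone p ∘ₗ map fun _ => p) (fun l _ => ?_) hz
    simpa using simplex_mem_vietorisChains_of_forall_eq hp hε (by simp)
  refine ⟨cone p (map (fun _ => p) z) + c, add_mem cone_mem hc, ?_⟩
  rw [map_add, boundary_cone, boundary_map, hbz, map_zero, map_zero, add_zero, hbc, ← add_assoc,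
    ZModModule.add_self, zero_add]

end Filling

end TupleChain

section CrossPolytope

open TupleChain

variable {d : ℕ}

/-- The unit sphere of the `ℓ¹` norm in `ℝᵏ`, embedded in `ℝᵈ` by letting the coordinates from
index `k` on vanish; `crossPolytopeSphere d d` is the whole `ℓ¹` unit sphere of `ℝᵈ`. -/
def crossPolytopeSphere (d k : ℕ) : Set (Fin d → ℝ) :=
  {x | ∑ i, |x i| = 1 ∧ ∀ i : Fin d, k ≤ i → x i = 0}

/-- The half of `crossPolytopeSphere d (i + 1)` on which its last coordinate `x i` is nonnegative:
the join of the pole `Pi.single i 1` with the equator `crossPolytopeSphere d i`. -/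
def crossPolytopeHemisphere (i : Fin d) : Set (Fin d → ℝ) :=
  {x ∈ crossPolytopeSphere d (i + 1) | 0 ≤ x i}

theorem crossPolytopeSphere_subset_full (k : ℕ) :
    crossPolytopeSphere d k ⊆ crossPolytopeSphere d d :=
  fun _ hx => ⟨hx.1, fun i hi => absurd i.2 hi.not_gt⟩

theorem crossPolytopeSphere_subset_hemisphere (i : Fin d) :
    crossPolytopeSphere d i ⊆ crossPolytopeHemisphere i :=
  fun _ hx => ⟨⟨hx.1, fun j hj => hx.2 j (by omega)⟩, (hx.2 i le_rfl).ge⟩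

theorem neg_mem_crossPolytopeSphere {k : ℕ} {x : Fin d → ℝ} (hx : x ∈ crossPolytopeSphere d k) :
    -x ∈ crossPolytopeSphere d k :=
  ⟨by simpa using hx.1, fun i hi => by simp [hx.2 i hi]⟩

theorem ne_zero_of_mem_crossPolytopeSphere {k : ℕ} {x : Fin d → ℝ}
    (hx : x ∈ crossPolytopeSphere d k) : x ≠ 0 := by
  rintro rfl
  simpa using hx.1

theorem single_mem_crossPolytopeSphere (i : Fin d) :
    Pi.single i 1 ∈ crossPolytopeSphere d (i + 1) := by
  refine ⟨?_, fun j hj => Pi.single_eq_of_ne (by rintro rfl; omega) _⟩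
  rw [Finset.sum_eq_single i (fun j _ hj => by simp [hj]) (by simp)]
  simp

theorem single_mem_crossPolytopeHemisphere (i : Fin d) :
    Pi.single i 1 ∈ crossPolytopeHemisphere i :=
  ⟨single_mem_crossPolytopeSphere i, by simp⟩

theorem isBounded_crossPolytopeSphere (k : ℕ) : Bornology.IsBounded (crossPolytopeSphere d k) := by
  refine (Metric.isBounded_closedBall (x := 0) (r := 1)).subset fun x hx => ?_
  rw [mem_closedBall_zero_iff, pi_norm_le_iff_of_nonneg zero_le_one, ← hx.1]
  exact fun i => Finset.single_le_sum (f := fun i => |x i|) (fun _ _ => abs_nonneg _)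
    (Finset.mem_univ i)

theorem isCompact_crossPolytopeSphere (k : ℕ) : IsCompact (crossPolytopeSphere d k) := by
  refine Metric.isCompact_of_isClosed_isBounded ?_ (isBounded_crossPolytopeSphere k)
  simp only [crossPolytopeSphere, Set.ofPred_and, Set.ofPred_forall]
  refine (isClosed_eq (by fun_prop) continuous_const).inter ?_
  exact isClosed_iInter fun i => isClosed_iInter fun _ => isClosed_eq (by fun_prop) continuous_const

theorem starConvex_crossPolytopeHemisphere (i : Fin d) :
    StarConvex ℝ (Pi.single i 1) (crossPolytopeHemisphere i) := by
  rintro x ⟨⟨hsum, hzero⟩, hxi⟩ a b ha hb hab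
  set y := a • Pi.single i 1 + b • x with hy
  have hyi : 0 ≤ y i := by
    simp only [hy, Pi.add_apply, Pi.smul_apply, smul_eq_mul, Pi.single_eq_same]
    positivity
  have abs_y (j : Fin d) : |y j| = a * (Pi.single i 1 : Fin d → ℝ) j + b * |x j| := by
    rcases eq_or_ne j i with rfl | hj
    · rw [abs_of_nonneg hyi, abs_of_nonneg hxi, hy]
      rfl
    · simp [hy, hj, abs_mul, abs_of_nonneg hb]
  refine ⟨⟨?_, fun j hj => ?_⟩, hyi⟩
  · simp_rw [abs_y, Finset.sum_add_distrib, ← Finset.mul_sum, hsum, Finset.sum_pi_single']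
    simpa using hab
  · have hji : j ≠ i := by rintro rfl; omega
    simp [hy, hji, hzero j hj]

theorem exists_symmetric_chain_coboundaryCup_eq_one {us : List ((Fin d → ℝ) → ZMod 2)}
    (hus : ∀ u ∈ us, ∀ x ∈ crossPolytopeSphere d d, u (-x) = u x + 1) (hlen : us.length < d)
    {ε : ℝ} (hε : 0 < ε) :
    ∃ c ∈ vietorisChains (crossPolytopeSphere d (us.length + 1)) ε,
      TupleChain.map Neg.neg (boundary c) = boundary c ∧ coboundaryCup us c = 1 := by
  induction us generalizing ε with
  | nil =>
    refine ⟨simplex [Pi.single ⟨0, hlen⟩ 1], ?_, ?_, coboundaryCup_nil_vertex _⟩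
    · exact simplex_mem_vietorisChains_of_forall_eq (single_mem_crossPolytopeSphere ⟨0, hlen⟩)
        hε.le (by simp)
    · simp [boundary_cons]
  | cons u us ih =>
    let i : Fin d := ⟨us.length + 1, hlen⟩
    obtain ⟨c, hc, hbc, hone⟩ := ih (fun v hv => hus v (List.mem_cons_of_mem _ hv))
      ((Nat.lt_succ_self _).trans hlen) (half_pos hε)
    let z := c + TupleChain.map Neg.neg c
    have hz : z ∈ vietorisChains (crossPolytopeHemisphere i) (ε / 2) :=
      vietorisChains_mono (crossPolytopeSphere_subset_hemisphere i) <| add_mem hc <|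
        map_mem_vietorisChains (fun _ => neg_mem_crossPolytopeSphere)
          (IsometryEquiv.neg _).isometry hc
    have hbz : boundary z = 0 := by rw [map_add, boundary_map, hbc, ZModModule.add_self]
    obtain ⟨c', hc', hbc'⟩ := exists_boundary_eq_of_starConvex
      (starConvex_crossPolytopeHemisphere i) (single_mem_crossPolytopeHemisphere i)
      ((isBounded_crossPolytopeSphere _).subset fun _ hx => hx.1) hε.le (half_lt_self hε) hz hbz
    refine ⟨c', vietorisChains_mono (fun _ hx => hx.1) hc', ?_, ?_⟩
    · rw [hbc', map_add, map_map_of_involutive neg_involutive, add_comm]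
    · rw [coboundaryCup, LinearMap.comp_apply, hbc', cup_coboundaryCup_add_map _ hc, hone]
      exact fun v hv l hl x hx => hus v hv x (crossPolytopeSphere_subset_full _ (hl x hx).1)

theorem exists_vietorisSimplex_forall_exists_ne {us : List ((Fin d → ℝ) → ZMod 2)}
    (hus : ∀ u ∈ us, ∀ x ∈ crossPolytopeSphere d d, u (-x) = u x + 1) (hlen : us.length < d)
    {ε : ℝ} (hε : 0 < ε) :
    ∃ l ∈ vietorisSimplices (crossPolytopeSphere d d) ε,
      l ≠ [] ∧ ∀ u ∈ us, ∃ x ∈ l, ∃ y ∈ l, u x ≠ u y := by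
  obtain ⟨c, hc, -, hone⟩ := exists_symmetric_chain_coboundaryCup_eq_one hus hlen hε
  obtain ⟨l, hl, hne⟩ : ∃ l ∈ vietorisSimplices (crossPolytopeSphere d d) ε,
      coboundaryCup us (simplex l) ≠ 0 := by
    by_contra! hzero
    have := apply_eq_of_mem_chainsOn (B := 0) hzero
      (vietorisChains_mono (crossPolytopeSphere_subset_full _) hc)
    simp [hone] at this
  refine ⟨l, hl, ?_, exists_ne_of_coboundaryCup_ne_zero hne⟩
  rintro rfl
  exact hne (coboundaryCup_simplex_nil us)

end CrossPolytope

section SignLabel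

variable {d : ℕ} {g : (Fin d → ℝ) → ℝ} {x : Fin d → ℝ}

/-- The sign of `g x`, encoded in `ZMod 2`. Where `g` vanishes, it is replaced by the sign of `x` in
the lexicographic order, so that antipodal points get different labels for every odd `g`. -/
noncomputable def signLabel (g : (Fin d → ℝ) → ℝ) (x : Fin d → ℝ) : ZMod 2 :=
  if 0 < toLex (g x, toLex x) then 1 else 0

theorem signLabel_neg (hx : x ≠ 0) (hg : g (-x) = -g x) :
    signLabel g (-x) = signLabel g x + 1 := by
  have neg_pair : toLex (g (-x), toLex (-x)) = -toLex (g x, toLex x) := by rw [hg]; rfl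
  have pair_ne : toLex (g x, toLex x) ≠ 0 := fun h => hx (congrArg Prod.snd h)
  simp only [signLabel, neg_pair, Left.neg_pos_iff]
  rcases pair_ne.lt_or_gt with h | h
  · simp [h, h.not_gt]
  · simp [h, h.not_gt, CharTwo.add_self_eq_zero]

theorem nonneg_of_signLabel_ne_zero (h : signLabel g x ≠ 0) : 0 ≤ g x := by
  have hpos : 0 < toLex (g x, toLex x) := by simpa [signLabel] using h
  exact (Prod.Lex.le_iff.1 hpos.le).elim le_of_lt fun h => h.1.le

theorem nonpos_of_signLabel_ne_one (h : signLabel g x ≠ 1) : g x ≤ 0 := by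
  have hle : toLex (g x, toLex x) ≤ 0 := by simpa [signLabel] using h
  exact (Prod.Lex.le_iff.1 hle).elim le_of_lt fun h => h.1.le

end SignLabel

section BorsukUlam

open Filter Topology

theorem exists_eq_zero_of_forall_exists_sign_change {X ι : Type*} [PseudoMetricSpace X] {S : Set X}
    (hS : IsCompact S) {g : X → ι → ℝ} (hg : ContinuousOn g S)
    (h : ∀ ε > 0, ∃ a ∈ S, ∀ i, (∃ x ∈ S, dist x a ≤ ε ∧ g x i ≤ 0) ∧
      ∃ y ∈ S, dist y a ≤ ε ∧ 0 ≤ g y i) :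
    ∃ a ∈ S, g a = 0 := by
  choose a haS hsign using fun n : ℕ => h (1 / ((n : ℝ) + 1)) Nat.one_div_pos_of_nat
  obtain ⟨b, hbS, φ, hφ, hlim⟩ := hS.tendsto_subseq haS
  have tendsto_of_near {x : ℕ → X} (hxS : ∀ n, x n ∈ S) (hx : ∀ n, dist (x n) (a n) ≤ 1 / (n + 1))
      (i : ι) : Tendsto (fun n => g (x (φ n)) i) atTop (𝓝 (g b i)) := by
    have near : Tendsto (fun n => dist (x (φ n)) (a (φ n))) atTop (𝓝 0) :=
      (squeeze_zero (fun _ => dist_nonneg) hx tendsto_one_div_add_atTop_nhds_zero_nat).comp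
        hφ.tendsto_atTop
    have lim : Tendsto (x ∘ φ) atTop (𝓝[S] b) := tendsto_nhdsWithin_iff.2
      ⟨(tendsto_iff_of_dist near).2 hlim, .of_forall fun n => hxS _⟩
    exact tendsto_pi_nhds.1 ((hg b hbS).tendsto.comp lim) i
  refine ⟨b, hbS, funext fun i => le_antisymm ?_ ?_⟩
  · choose x hxS hxa hx using fun n => (hsign n i).1
    exact le_of_tendsto' (tendsto_of_near hxS hxa i) fun n => hx _
  · choose y hyS hya hy using fun n => (hsign n i).2
    exact ge_of_tendsto' (tendsto_of_near hyS hya i) fun n => hy _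

open TupleChain in
theorem exists_mem_crossPolytopeSphere_eq_zero_of_odd {d : ℕ} {ι : Type*} [Fintype ι]
    (hι : Fintype.card ι < d) {g : (Fin d → ℝ) → ι → ℝ}
    (hg : ContinuousOn g (crossPolytopeSphere d d))
    (hodd : ∀ x ∈ crossPolytopeSphere d d, g (-x) = -g x) :
    ∃ x ∈ crossPolytopeSphere d d, g x = 0 := by
  refine exists_eq_zero_of_forall_exists_sign_change (isCompact_crossPolytopeSphere d) hg
    fun ε hε => ?_
  let u (i : ι) : (Fin d → ℝ) → ZMod 2 := signLabel fun x => g x i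
  obtain ⟨l, hl, hl0, hne⟩ := exists_vietorisSimplex_forall_exists_ne
    (us := Finset.univ.toList.map u) (d := d)
    (List.forall_mem_map.2 fun i _ x hx =>
      signLabel_neg (ne_zero_of_mem_crossPolytopeSphere hx) (congrFun (hodd x hx) i))
    (by simpa using hι) hε
  obtain ⟨a, ha⟩ := List.exists_mem_of_ne_nil l hl0
  refine ⟨a, (hl a ha).1, fun i => ?_⟩
  obtain ⟨x, hx, y, hy, hxy⟩ := hne (u i) (List.mem_map.2 ⟨i, by simp, rfl⟩)
  have sign_change {x y} (hx : x ∈ l) (hy : y ∈ l) (hux : u i x = 0) (huy : u i y ≠ 0) :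
      (∃ x ∈ crossPolytopeSphere d d, dist x a ≤ ε ∧ g x i ≤ 0) ∧
        ∃ y ∈ crossPolytopeSphere d d, dist y a ≤ ε ∧ 0 ≤ g y i :=
    ⟨⟨x, (hl x hx).1, (hl x hx).2 a ha, nonpos_of_signLabel_ne_one (hux.trans_ne zero_ne_one)⟩,
      y, (hl y hy).1, (hl y hy).2 a ha, nonneg_of_signLabel_ne_zero huy⟩
  by_cases hux : u i x = 0
  · exact sign_change hx hy hux fun huy => hxy (hux.trans huy.symm)
  · have huy : u i y = 0 := by
      by_contra huy
      exact hxy ((Fin.eq_one_of_ne_zero _ hux).trans (Fin.eq_one_of_ne_zero _ huy).symm)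
    exact sign_change hy hx huy hux

open Metric Module

theorem borsuk_ulam {E ι : Type*} [NormedAddCommGroup E] [NormedSpace ℝ E] [Fintype ι]
    (hι : Fintype.card ι < finrank ℝ E) {g : E → ι → ℝ} (hg : ContinuousOn g (sphere 0 1))
    (hodd : ∀ x ∈ sphere 0 1, g (-x) = -g x) : ∃ x ∈ sphere 0 1, g x = 0 := by
  have : FiniteDimensional ℝ E := finite_of_finrank_pos (Nat.zero_lt_of_lt hι)
  let L : (Fin (finrank ℝ E) → ℝ) ≃L[ℝ] E := ContinuousLinearEquiv.ofFinrankEq (by simp)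
  let normalize (x : Fin (finrank ℝ E) → ℝ) : E := ‖L x‖⁻¹ • L x
  let S := crossPolytopeSphere (finrank ℝ E) (finrank ℝ E)
  have L_ne_zero {x} (hx : x ∈ S) : L x ≠ 0 :=
    L.map_ne_zero_iff.2 (ne_zero_of_mem_crossPolytopeSphere hx)
  have normalize_mem : Set.MapsTo normalize S (sphere 0 1) := fun x hx => by
    rw [mem_sphere_zero_iff_norm, norm_smul, norm_inv, norm_norm,
      inv_mul_cancel₀ (norm_ne_zero_iff.2 (L_ne_zero hx))]
  have normalize_cont : ContinuousOn normalize S := by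
    refine ContinuousOn.smul (ContinuousOn.inv₀ ?_ fun x hx => norm_ne_zero_iff.2 (L_ne_zero hx)) ?_
    all_goals fun_prop
  obtain ⟨x, hx, hgx⟩ := exists_mem_crossPolytopeSphere_eq_zero_of_odd hι
    (hg.comp normalize_cont normalize_mem) fun x hx => by
      simpa [normalize] using hodd _ (normalize_mem hx)
  exact ⟨normalize x, normalize_mem hx, hgx⟩

end BorsukUlam

section EqualValues

variable {E : Type*} [NormedAddCommGroup E] [InnerProductSpace ℝ E]

theorem norm_inv_sqrt_two_smul_add {x y : E} (hx : ‖x‖ = 1) (hy : ‖y‖ = 1) (hxy : ⟪x, y⟫ = 0) :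
    ‖(√2)⁻¹ • (x + y)‖ = 1 := by
  have hadd : ‖x + y‖ = √2 := by
    rw [← norm_add_eq_sqrt_iff_real_inner_eq_zero] at hxy
    rw [hxy, hx, hy]
    norm_num
  rw [norm_smul, hadd, norm_inv, Real.norm_of_nonneg (by positivity),
    inv_mul_cancel₀ (by positivity)]

open Metric Module

theorem squares_inscribe_one_general {ι : Type*} [Fintype ι]
    (hι : Fintype.card ι + 2 ≤ finrank ℝ E) (f : ι → E → ℝ)
    (hf : ∀ i, ContinuousOn (f i) (sphere 0 1)) :
    ∃ v₁ v₂ : E, ‖v₁‖ = 1 ∧ ‖v₂‖ = 1 ∧ ⟪v₁, v₂⟫ = 0 ∧ ∀ i, f i v₁ = f i v₂ := by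
  have : FiniteDimensional ℝ E := finite_of_finrank_pos (by omega)
  have : Nontrivial E := nontrivial_of_finrank_pos (R := ℝ) (by omega)
  obtain ⟨e, he⟩ := exists_norm_eq E zero_le_one
  have hdim : Fintype.card ι < finrank ℝ (ℝ ∙ e)ᗮ := by
    have := (ℝ ∙ e).finrank_add_finrank_orthogonal
    have := finrank_span_singleton (K := ℝ) (v := e) (by rintro rfl; simp at he)
    omega
  let v (b : (ℝ ∙ e)ᗮ) : E := (√2)⁻¹ • (e + b)
  have v_mem : Set.MapsTo v (sphere 0 1) (sphere 0 1) := fun b hb =>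
    mem_sphere_zero_iff_norm.2 <| norm_inv_sqrt_two_smul_add he (mem_sphere_zero_iff_norm.1 hb)
      (Submodule.mem_orthogonal_singleton_iff_inner_right.1 b.2)
  have hv : ContinuousOn v (sphere 0 1) := by fun_prop
  have neg_mem : Set.MapsTo Neg.neg (sphere (0 : (ℝ ∙ e)ᗮ) 1) (sphere 0 1) := fun b hb => by
    simpa using hb
  obtain ⟨b, hb, hgb⟩ := borsuk_ulam hdim (g := fun b i => f i (v b) - f i (v (-b)))
    (continuousOn_pi.2 fun i => ((hf i).comp hv v_mem).sub
      (((hf i).comp hv v_mem).comp continuousOn_neg neg_mem))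
    fun b _ => by ext i; simp
  refine ⟨v b, v (-b), by simpa using v_mem hb, by simpa using v_mem (neg_mem hb), ?_,
    fun i => sub_eq_zero.1 (congrFun hgb i)⟩
  have : ⟪e + b, e - b⟫ = 0 := (real_inner_add_sub_eq_zero_iff _ _).2 (by simpa [he] using hb.symm)
  simp only [v, Submodule.coe_neg, ← sub_eq_add_neg, real_inner_smul_left, real_inner_smul_right,
    this, mul_zero]

end EqualValues

theorem continuous_dirWidth {n : ℕ} {K : Set (EuclideanSpace ℝ (Fin n))} (hK : IsCompact K) :
    Continuous (dirWidth K) :=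
  have : Continuous (Function.uncurry fun v x : EuclideanSpace ℝ (Fin n) => ⟪x, v⟫) := by
    unfold Function.uncurry; fun_prop
  (hK.continuous_sSup this).sub (hK.continuous_sInf this)

/-- Given `n - 2` nonempty compact convex regions in `ℝⁿ` (`n ≥ 2`), there exist
orthonormal vectors `v₁, v₂` such that each region has equal widths in the
directions `v₁` and `v₂`. -/
theorem squares_inscribe_one (n : ℕ) (hn : 2 ≤ n)
    (K : Fin (n - 2) → Set (EuclideanSpace ℝ (Fin n)))
    (hne : ∀ i, (K i).Nonempty) (hcpt : ∀ i, IsCompact (K i))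
    (hconv : ∀ i, Convex ℝ (K i)) :
    ∃ v₁ v₂ : EuclideanSpace ℝ (Fin n),
      ‖v₁‖ = 1 ∧ ‖v₂‖ = 1 ∧ ⟪v₁, v₂⟫ = 0 ∧
      ∀ i, dirWidth (K i) v₁ = dirWidth (K i) v₂ :=
  squares_inscribe_one_general (by simp [hn]) (fun i => dirWidth (K i))
    fun i => (continuous_dirWidth (hcpt i)).continuousOn
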